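/- Let ζ ∈ L satisfy ζ^r = 1. If θ, θ′ ∈ A satisfy σ(θ) = (1 ⊗ ζ)·θ and σ(θ′) = (1 ⊗ ζ)·θ′, and θ is a unit of A, then θ′·θ^{−1} lies in 1 ⊗ L (the canonical image of L in A); moreover θ^r itself lies in 1 ⊗ L. -/

import Mathlib

open scoped TensorProduct

/-!
The quotient `θ' / θ` and the power `θ ^ r` are both fixed by `σ`, as the factor `ζ` cancels in the
first and becomes `ζ ^ r = 1` in the second. Since `L` is flat over `F`, the fixed points of
`σ = id ⊗ Frob` are `L ⊗ k^Frob`, and `k^Frob = F` because the roots of `X ^ q - X` in `k` are the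
elements of `F`.
-/

open scoped Polynomial

section Eigenvectors

variable {M G : Type*} [CommMonoid M] [FunLike G M M] [MonoidHomClass G M M] {σ : G} {c : M}

theorem map_mul_units_inv_eq_self {u : Mˣ} {v : M} (hu : σ u = c * u) (hv : σ v = c * v) :
    σ (v * ↑u⁻¹) = v * ↑u⁻¹ := by
  have σu_isUnit : IsUnit (σ u) := u.isUnit.map σ
  refine σu_isUnit.mul_right_cancel ?_
  calc σ (v * ↑u⁻¹) * σ u = σ v := by rw [← map_mul, Units.inv_mul_cancel_right]
    _ = v * ↑u⁻¹ * (c * u) := by rw [hv, mul_left_comm, Units.inv_mul_cancel_right]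
    _ = v * ↑u⁻¹ * σ u := by rw [hu]

theorem map_pow_eq_self_of_pow_eq_one {v : M} {n : ℕ} (hv : σ v = c * v) (hc : c ^ n = 1) :
    σ (v ^ n) = v ^ n := by
  rw [map_pow, hv, mul_pow, hc, one_mul]

end Eigenvectors

theorem subalgebra_baseChange_bot (R T A : Type*) [CommSemiring R] [CommSemiring T] [Semiring A]
    [Algebra R T] [Algebra R A] : (⊥ : Subalgebra R A).baseChange T = ⊥ := by
  refine le_bot_iff.mp ?_
  rintro _ ⟨z, rfl⟩
  induction z with
  | zero => simp
  | add z₁ z₂ h₁ h₂ => simpa using add_mem h₁ h₂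
  | tmul t a =>
    obtain ⟨r, hr⟩ := Algebra.mem_bot.mp a.2
    refine Algebra.mem_bot.mpr ⟨r • t, ?_⟩
    calc algebraMap T (T ⊗[R] A) (r • t) = (r • t) ⊗ₜ[R] 1 := rfl
      _ = t ⊗ₜ[R] (r • 1) := TensorProduct.smul_tmul r t 1
      _ = t ⊗ₜ[R] (a : A) := by rw [← Algebra.algebraMap_eq_smul_one, hr]

theorem equalizer_map_id_eq_baseChange {R A B : Type*} (T : Type*) [CommRing R] [CommRing T]
    [CommRing A] [CommRing B] [Algebra R T] [Algebra R A] [Algebra R B] [Module.Flat R T]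
    (f g : A →ₐ[R] B) :
    (Algebra.TensorProduct.map (.id T T) f).equalizer (Algebra.TensorProduct.map (.id T T) g) =
      (f.equalizer g).baseChange T := by
  ext y
  constructor
  · intro hy
    obtain ⟨z, hz⟩ := (AlgHom.tensorEqualizerEquiv T T f g).surjective ⟨y, hy⟩
    exact ⟨z, by simpa using congrArg Subtype.val hz⟩
  · rintro ⟨z, rfl⟩
    simpa using (AlgHom.tensorEqualizer T T f g z).2

section FiniteField

variable (F k L : Type*) [Field F] [Fintype F] [CommRing k] [IsDomain k] [CommRing L]
  [Algebra F k] [Algebra F L]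

theorem equalizer_frobeniusAlgHom_id :
    (FiniteField.frobeniusAlgHom F k).equalizer (.id F k) = ⊥ := by
  refine le_bot_iff.mp fun x hx ↦ Algebra.mem_bot.mpr ?_
  have splits : (Polynomial.X ^ Fintype.card F - Polynomial.X : F[X]).Splits := by
    simpa using (FiniteField.isSplittingField_sub F F).splits
  refine splits.mem_range_of_isRoot
    (FiniteField.X_pow_card_sub_X_ne_zero F Fintype.one_lt_card) ?_
  simpa [sub_eq_zero] using hx

theorem equalizer_map_id_frobeniusAlgHom_id :
    (Algebra.TensorProduct.map (.id L L) (FiniteField.frobeniusAlgHom F k)).equalizer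
      (.id L (L ⊗[F] k)) = ⊥ := by
  rw [← Algebra.TensorProduct.map_id, equalizer_map_id_eq_baseChange,
    equalizer_frobeniusAlgHom_id, subalgebra_baseChange_bot]

end FiniteField

theorem stmt_5_general {F k L : Type*} [Field F] [Fintype F] [CommRing k] [IsDomain k]
    [CommRing L] [Algebra F k] [Algebra F L] (q n : ℕ) (hq : Fintype.card F = q)
    (σ : (L ⊗[F] k) →ₐ[L] (L ⊗[F] k))
    (hσ : ∀ (c : L) (x : k), σ (c ⊗ₜ[F] x) = c ⊗ₜ[F] (x ^ q))
    (ζ : L) (hζ : ζ ^ n = 1) (θ : (L ⊗[F] k)ˣ) (θ' : L ⊗[F] k)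
    (hθ : σ (θ : L ⊗[F] k) = algebraMap L (L ⊗[F] k) ζ * (θ : L ⊗[F] k))
    (hθ' : σ θ' = algebraMap L (L ⊗[F] k) ζ * θ') :
    θ' * ((θ⁻¹ : (L ⊗[F] k)ˣ) : L ⊗[F] k) ∈ (algebraMap L (L ⊗[F] k)).range ∧
      (θ : L ⊗[F] k) ^ n ∈ (algebraMap L (L ⊗[F] k)).range := by
  subst hq
  obtain rfl : σ = Algebra.TensorProduct.map (.id L L) (FiniteField.frobeniusAlgHom F k) := by
    ext x
    exact hσ 1 x
  have mem_range_of_fixed {a : L ⊗[F] k}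
      (ha : Algebra.TensorProduct.map (.id L L) (FiniteField.frobeniusAlgHom F k) a = a) :
      a ∈ (algebraMap L (L ⊗[F] k)).range :=
    Algebra.mem_bot.mp (equalizer_map_id_frobeniusAlgHom_id F k L ▸ ha)
  have hζ_pow : algebraMap L (L ⊗[F] k) ζ ^ n = 1 := by rw [← map_pow, hζ, map_one]
  exact ⟨mem_range_of_fixed (map_mul_units_inv_eq_self hθ hθ'),
    mem_range_of_fixed (map_pow_eq_self_of_pow_eq_one hθ hζ_pow)⟩

/-- In `A = k ⊗_{𝔽_q} L` (written `L ⊗[F] k`, Frobenius `σ` on the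
`k`-factor), let `ζ ∈ L` with `ζ^r = 1`. If `θ, θ′` satisfy `σ(θ) = (1 ⊗ ζ)·θ` and
`σ(θ′) = (1 ⊗ ζ)·θ′`, with `θ` a unit of `A`, then `θ′·θ⁻¹` lies in the canonical image of
`L` in `A`; moreover `θ^r` itself lies in that image. -/
theorem stmt_5 {F k L : Type*} [Field F] [Fintype F] [Field k] [Field L]
    [Algebra F k] [Algebra F L] [FiniteDimensional F k] [FiniteDimensional F L]
    (q r : ℕ) (hq : Fintype.card F = q) (hr : Module.finrank F k = r)
    (σ : (L ⊗[F] k) →ₐ[L] (L ⊗[F] k))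
    (hσ : ∀ (c : L) (x : k), σ (c ⊗ₜ[F] x) = c ⊗ₜ[F] (x ^ q))
    (ζ : L) (hζ : ζ ^ r = 1)
    (θ : (L ⊗[F] k)ˣ) (θ' : L ⊗[F] k)
    (hθ : σ (θ : L ⊗[F] k) = algebraMap L (L ⊗[F] k) ζ * (θ : L ⊗[F] k))
    (hθ' : σ θ' = algebraMap L (L ⊗[F] k) ζ * θ') :
    θ' * ((θ⁻¹ : (L ⊗[F] k)ˣ) : L ⊗[F] k) ∈ (algebraMap L (L ⊗[F] k)).range ∧
      ((θ : L ⊗[F] k)) ^ r ∈ (algebraMap L (L ⊗[F] k)).range :=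
  stmt_5_general q r hq σ hσ ζ hζ θ θ' hθ hθ'
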